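/- arXiv:2403.14964 — 3 statements merged into one kernel-verified Lean document; each statement's English description precedes it below -/
import Mathlib

section
/- Let n be a positive integer, let λ = (λ_1,…,λ_r) and μ = (μ_1,…,μ_s) be compositions of n with associated blocks Y_i(λ), Y_j(μ) and Young subgroups S_λ, S_μ ≤ S_n, and let σ ∈ S_n. Set γ_{ij} := card(σ(Y_i(λ)) ∩ Y_j(μ)). Then the subgroup {τ ∈ S_λ : σ τ σ⁻¹ ∈ S_μ} = S_λ ∩ σ⁻¹ S_μ σ of S_n consists exactly of those permutations that map each set Y_i(λ) ∩ σ⁻¹(Y_j(μ)) into itself, and its cardinality equals ∏_{i=1}^{r} ∏_{j=1}^{s} γ_{ij}!. -/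
/-- The `i`-th consecutive block of `{0, …, n-1}` (0-indexed version of `{1, …, n}`)
associated to a composition `lam = (lam 0, …, lam (r-1))` of `n`. -/
def blockSet (n : ℕ) {r : ℕ} (lam : Fin r → ℕ) (i : Fin r) : Finset (Fin n) :=
  Finset.univ.filter fun x : Fin n =>
    (∑ i' ∈ Finset.Iio i, lam i') ≤ (x : ℕ) ∧ (x : ℕ) < ∑ i' ∈ Finset.Iic i, lam i'

theorem block_fun (n r : ℕ) (lam : Fin r → ℕ) (hs : ∑ i, lam i = n) :
    ∃ f : Fin n → Fin r, ∀ x i, x ∈ blockSet n lam i ↔ f x = i := by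
  have ex : ∀ x : Fin n, ∃ i : Fin r, x ∈ blockSet n lam i := by
    intro x
    have h1 : ∃ i : Fin r, (x : ℕ) < ∑ i' ∈ Finset.Iic i, lam i' := by
      rcases r with _ | r
      · have := x.2
        simp at hs
        omega
      · refine ⟨Fin.last r, ?_⟩
        have : Finset.Iic (Fin.last r) = Finset.univ := by
          ext a; simp [Fin.le_last]
        rw [this, hs]
        exact x.2
    obtain ⟨i, hi, hmin⟩ := WellFounded.has_min (wellFounded_lt (α := Fin r))
      {i | (x : ℕ) < ∑ i' ∈ Finset.Iic i, lam i'} h1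
    refine ⟨i, ?_⟩
    simp only [blockSet, Finset.mem_filter, Finset.mem_univ, true_and]
    refine ⟨?_, hi⟩
    by_cases h0 : (i : ℕ) = 0
    · have : Finset.Iio i = ∅ := by
        ext a; simp [Fin.le_def, h0]
      simp [this]
    · let k : Fin r := ⟨i - 1, by omega⟩
      have hk : Finset.Iio i = Finset.Iic k := by
        ext a; simp only [Finset.mem_Iio, Finset.mem_Iic, Fin.le_def, Fin.lt_def, k]; omega
      rw [hk]
      by_contra hc
      exact hmin k (not_le.mp hc) (by simp [Fin.lt_def, k]; omega)
  have key : ∀ (x : Fin n) (i k : Fin r), x ∈ blockSet n lam i → x ∈ blockSet n lam k → ¬ i < k := by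
    intro x i k hi hk hlt
    simp only [blockSet, Finset.mem_filter, Finset.mem_univ, true_and] at hi hk
    have : ∑ i' ∈ Finset.Iic i, lam i' ≤ ∑ i' ∈ Finset.Iio k, lam i' := by
      apply Finset.sum_le_sum_of_subset
      intro a ha
      simp at ha ⊢
      exact lt_of_le_of_lt ha hlt
    omega
  choose f hf using ex
  refine ⟨f, fun x i => ⟨fun h => ?_, fun h => h ▸ hf x⟩⟩
  exact le_antisymm (not_lt.mp (key x _ _ h (hf x))) (not_lt.mp (key x _ _ (hf x) h))

theorem image_iff {n r : ℕ} (B : Fin r → Finset (Fin n)) (f : Fin n → Fin r)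
    (hf : ∀ x i, x ∈ B i ↔ f x = i) (τ : Equiv.Perm (Fin n)) :
    (∀ i, (B i).image ⇑τ = B i) ↔ ∀ x, f (τ x) = f x := by
  constructor
  · intro h x
    rw [← hf, ← h]
    exact Finset.mem_image_of_mem _ ((hf _ _).2 rfl)
  · intro h i
    apply Finset.eq_of_subset_of_card_le
    · intro y hy
      obtain ⟨x, hx, rfl⟩ := Finset.mem_image.1 hy
      rw [hf] at hx ⊢
      rw [h, hx]
    · rw [Finset.card_image_of_injective _ τ.injective]

/-- The subgroup `{τ ∈ S_λ : σ τ σ⁻¹ ∈ S_μ} = S_λ ∩ σ⁻¹ S_μ σ` consists exactly of the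
permutations mapping each set `Y_i(λ) ∩ σ⁻¹(Y_j(μ))` into itself, and its cardinality is
`∏_{i,j} γ_{ij}!` where `γ_{ij} = card (σ(Y_i(λ)) ∩ Y_j(μ))`. -/
theorem stabilizer_card (n r s : ℕ) (hn : 0 < n)
    (lam : Fin r → ℕ) (mu : Fin s → ℕ)
    (hlampos : ∀ i, 0 < lam i) (hmupos : ∀ j, 0 < mu j)
    (hlamsum : ∑ i, lam i = n) (hmusum : ∑ j, mu j = n)
    (σ : Equiv.Perm (Fin n)) :
    (∀ τ : Equiv.Perm (Fin n),
      ((∀ i, (blockSet n lam i).image ⇑τ = blockSet n lam i) ∧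
       (∀ j, (blockSet n mu j).image ⇑(σ * τ * σ⁻¹) = blockSet n mu j)) ↔
      (∀ (i : Fin r) (j : Fin s),
        ∀ x ∈ blockSet n lam i ∩ (blockSet n mu j).image ⇑σ⁻¹,
          τ x ∈ blockSet n lam i ∩ (blockSet n mu j).image ⇑σ⁻¹)) ∧
    Nat.card {τ : Equiv.Perm (Fin n) //
        (∀ i, (blockSet n lam i).image ⇑τ = blockSet n lam i) ∧
        (∀ j, (blockSet n mu j).image ⇑(σ * τ * σ⁻¹) = blockSet n mu j)} =
      ∏ i : Fin r, ∏ j : Fin s,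
        Nat.factorial (((blockSet n lam i).image ⇑σ ∩ blockSet n mu j).card) := by
  obtain ⟨f, hf⟩ := block_fun n r lam hlamsum
  obtain ⟨g, hg⟩ := block_fun n s mu hmusum
  have hg' : ∀ x j, x ∈ (blockSet n mu j).image ⇑σ⁻¹ ↔ g (σ x) = j := by
    intro x j
    rw [← hg, Finset.mem_image]
    constructor
    · rintro ⟨y, hy, rfl⟩
      simpa using hy
    · intro h
      exact ⟨σ x, h, by simp⟩
  have hA : ∀ τ : Equiv.Perm (Fin n),
      ((∀ i, (blockSet n lam i).image ⇑τ = blockSet n lam i) ∧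
       (∀ j, (blockSet n mu j).image ⇑(σ * τ * σ⁻¹) = blockSet n mu j)) ↔
      ∀ x, f (τ x) = f x ∧ g (σ (τ x)) = g (σ x) := by
    intro τ
    rw [image_iff _ f hf, image_iff _ g hg, forall_and]
    refine and_congr Iff.rfl ⟨fun h x => ?_, fun h x => ?_⟩
    · simpa using h (σ x)
    · simpa using h (σ⁻¹ x)
  refine ⟨fun τ => ?_, ?_⟩
  · rw [hA]
    simp only [Finset.mem_inter, hf, hg']
    constructor
    · rintro h i j x ⟨rfl, rfl⟩
      exact h x
    · intro h x
      exact h _ _ x ⟨rfl, rfl⟩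
  · let F : Fin n → Fin r × Fin s := fun x => (f x, g (σ x))
    have e := DomMulAct.stabilizer_card F
    rw [Fintype.prod_prod_type] at e
    rw [Nat.card_congr (Equiv.subtypeEquivRight (q := fun τ : Equiv.Perm (Fin n) => F ∘ τ = F)
      fun τ => ?_), Nat.card_eq_fintype_card, e]
    · refine Finset.prod_congr rfl fun i _ => Finset.prod_congr rfl fun j _ => ?_
      congr 1
      rw [Fintype.card_subtype, ← Finset.card_image_of_injective _ σ.injective]
      congr 1
      ext y
      simp only [Finset.mem_image, Finset.mem_inter, Finset.mem_filter, Finset.mem_univ, true_and,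
        hf, hg, F, Prod.mk.injEq]
      constructor
      · rintro ⟨x, ⟨h1, h2⟩, rfl⟩
        exact ⟨⟨x, h1, rfl⟩, h2⟩
      · rintro ⟨⟨x, h1, rfl⟩, h2⟩
        exact ⟨x, ⟨h1, h2⟩, rfl⟩
    · rw [hA, funext_iff]
      simp [F]
end

section
/- Let n be a positive integer, let λ = (λ_1,…,λ_r) and μ = (μ_1,…,μ_s) be compositions of n with associated blocks Y_i(λ), Y_j(μ) and Young subgroups S_λ, S_μ ≤ S_n, and let σ ∈ S_n. Set γ_{ij} := card(σ(Y_i(λ)) ∩ Y_j(μ)). Then the double coset S_μ σ S_λ = {τ₁ σ τ₂ : τ₁ ∈ S_μ, τ₂ ∈ S_λ} consists of exactly λ! μ! / γ! elements, where λ! = λ_1!⋯λ_r!, μ! = μ_1!⋯μ_s!, and γ! = ∏_{i,j} γ_{ij}!. -/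
theorem card_blockSet_aux (n r : ℕ) (lam : Fin r → ℕ) (hs : ∑ i, lam i = n) (i : Fin r) :
    (blockSet n lam i).card = lam i := by
  have h1 : ∑ i' ∈ Finset.Iic i, lam i' = (∑ i' ∈ Finset.Iio i, lam i') + lam i := by
    rw [← Finset.Iio_insert, Finset.sum_insert (by simp), add_comm]
  have h2 : ∑ i' ∈ Finset.Iic i, lam i' ≤ n := by
    rw [← hs]; exact Finset.sum_le_sum_of_subset (Finset.subset_univ _)
  have : (blockSet n lam i).map Fin.valEmbedding =
      Finset.Ico (∑ i' ∈ Finset.Iio i, lam i') (∑ i' ∈ Finset.Iic i, lam i') := by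
    ext x
    simp only [blockSet, Finset.mem_map, Finset.mem_filter, Finset.mem_univ, true_and,
      Fin.valEmbedding_apply, Finset.mem_Ico]
    constructor
    · rintro ⟨a, h, rfl⟩; exact h
    · intro h; exact ⟨⟨x, by omega⟩, h, rfl⟩
  rw [← Finset.card_map Fin.valEmbedding, this, Nat.card_Ico]; omega

theorem blockSet_lt_aux (n r : ℕ) (lam : Fin r → ℕ) (i j : Fin r) (x : Fin n)
    (hi : x ∈ blockSet n lam i) (hj : x ∈ blockSet n lam j) (h : i < j) : False := by
  simp only [blockSet, Finset.mem_filter, Finset.mem_univ, true_and] at hi hj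
  have : ∑ i' ∈ Finset.Iic i, lam i' ≤ ∑ i' ∈ Finset.Iio j, lam i' := by
    apply Finset.sum_le_sum_of_subset
    intro k hk
    simp only [Finset.mem_Iic, Finset.mem_Iio] at *
    exact lt_of_le_of_lt hk h
  omega

theorem blockSet_uniq_aux (n r : ℕ) (lam : Fin r → ℕ) (i j : Fin r) (x : Fin n)
    (hi : x ∈ blockSet n lam i) (hj : x ∈ blockSet n lam j) : i = j := by
  rcases lt_trichotomy i j with h | h | h
  · exact (blockSet_lt_aux n r lam i j x hi hj h).elim
  · exact h
  · exact (blockSet_lt_aux n r lam j i x hj hi h).elim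

theorem blockSet_fun_aux (n r : ℕ) (lam : Fin r → ℕ) (hs : ∑ i, lam i = n) :
    ∃ f : Fin n → Fin r, ∀ i x, x ∈ blockSet n lam i ↔ f x = i := by
  have h : (Finset.univ : Finset (Fin r)).biUnion (blockSet n lam) = Finset.univ := by
    rw [← Finset.card_eq_iff_eq_univ, Finset.card_biUnion]
    · simp [card_blockSet_aux n r lam hs, hs]
    · intro i _ j _ hij
      refine Finset.disjoint_left.2 ?_
      intro x hi hj
      exact hij (blockSet_uniq_aux n r lam i j x hi hj)
  have h' : ∀ x : Fin n, ∃ i, x ∈ blockSet n lam i := by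
    intro x
    have := Finset.mem_univ x
    rw [← h] at this
    simpa using this
  choose f hf using h'
  refine ⟨f, fun i x => ⟨fun hi => blockSet_uniq_aux n r lam _ _ x (hf x) hi, ?_⟩⟩
  rintro rfl
  exact hf x

theorem image_iff_aux {n r : ℕ} (B : Fin r → Finset (Fin n)) (f : Fin n → Fin r)
    (hf : ∀ i x, x ∈ B i ↔ f x = i) (τ : Equiv.Perm (Fin n)) :
    (∀ i, (B i).image ⇑τ = B i) ↔ f ∘ ⇑τ = f := by
  constructor
  · intro h
    funext x
    have : τ x ∈ B (f x) := by
      rw [← h]; exact Finset.mem_image_of_mem _ ((hf _ _).2 rfl)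
    exact (hf _ _).1 this
  · intro h i
    apply Finset.eq_of_subset_of_card_le
    · intro y hy
      obtain ⟨x, hx, rfl⟩ := Finset.mem_image.1 hy
      rw [hf] at hx ⊢
      rw [← hx]; exact congrFun h x
    · rw [Finset.card_image_of_injective _ τ.injective]

theorem double_count_aux {n r s : ℕ} (f : Fin n → Fin r) (g : Fin n → Fin s)
    (σ : Equiv.Perm (Fin n)) :
    Nat.card {π : Equiv.Perm (Fin n) // ∃ τ₁ τ₂ : Equiv.Perm (Fin n),
        g ∘ ⇑τ₁ = g ∧ f ∘ ⇑τ₂ = f ∧ π = τ₁ * σ * τ₂} *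
      Nat.card {c : Equiv.Perm (Fin n) // (fun x => (f x, g (σ x))) ∘ ⇑c =
        (fun x => (f x, g (σ x)))} =
    Nat.card {c : Equiv.Perm (Fin n) // f ∘ ⇑c = f} *
      Nat.card {c : Equiv.Perm (Fin n) // g ∘ ⇑c = g} := by
  have inv_f : ∀ {t : ℕ} (f : Fin n → Fin t) (c : Equiv.Perm (Fin n)), f ∘ ⇑c = f →
      ∀ x, f (c⁻¹ x) = f x := by
    intro t f c h x
    have := congrFun h (c⁻¹ x)
    simpa using this.symm
  have key : ∀ c : Equiv.Perm (Fin n), ((fun x => (f x, g (σ x))) ∘ ⇑c =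
        (fun x => (f x, g (σ x)))) ↔ f ∘ ⇑c = f ∧ g ∘ ⇑(σ * c * σ⁻¹) = g := by
    intro c
    constructor
    · intro h
      refine ⟨funext fun x => (Prod.ext_iff.1 (congrFun h x)).1, funext fun x => ?_⟩
      have := (Prod.ext_iff.1 (congrFun h (σ⁻¹ x))).2
      simpa using this
    · rintro ⟨h1, h2⟩
      funext x
      have := congrFun h2 (σ x)
      refine Prod.ext (congrFun h1 x) ?_
      simpa using this
  rw [← Nat.card_prod, ← Nat.card_prod]
  have hch : ∀ π : {π : Equiv.Perm (Fin n) // ∃ τ₁ τ₂ : Equiv.Perm (Fin n),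
        g ∘ ⇑τ₁ = g ∧ f ∘ ⇑τ₂ = f ∧ π = τ₁ * σ * τ₂}, ∃ τ₁ τ₂ : Equiv.Perm (Fin n),
        g ∘ ⇑τ₁ = g ∧ f ∘ ⇑τ₂ = f ∧ π.1 = τ₁ * σ * τ₂ := fun π => π.2
  choose a b ha hb hab using hch
  refine Nat.card_eq_of_bijective (fun p => (⟨p.2.1⁻¹ * b p.1, ?_⟩,
    ⟨a p.1 * (σ * p.2.1 * σ⁻¹), ?_⟩)) ⟨?_, ?_⟩
  · funext x
    have h := inv_f f p.2.1 ((key _).1 p.2.2).1 (b p.1 x)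
    have h' := congrFun (hb p.1) x
    simp only [Function.comp_apply, Equiv.Perm.mul_apply] at h h' ⊢
    rw [h, h']
  · funext x
    have h := congrFun ((key _).1 p.2.2).2 x
    have h' := congrFun (ha p.1) ((σ * p.2.1 * σ⁻¹) x)
    rw [Function.comp_apply] at h h'
    rw [Function.comp_apply, Equiv.Perm.mul_apply, h', h]
  · rintro ⟨π, c⟩ ⟨π', c'⟩ h
    simp only [Prod.mk.injEq, Subtype.mk.injEq] at h
    obtain ⟨h1, h2⟩ := h
    have e : π = π' := by
      apply Subtype.ext
      have e1 : π.1 = (a π * (σ * c.1 * σ⁻¹)) * σ * (c.1⁻¹ * b π) := by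
        rw [hab π]; group
      have e2 : π'.1 = (a π' * (σ * c'.1 * σ⁻¹)) * σ * (c'.1⁻¹ * b π') := by
        rw [hab π']; group
      rw [e1, e2, h1, h2]
    subst e
    have : c = c' := Subtype.ext (inv_injective (mul_right_cancel h1))
    rw [this]
  · rintro ⟨⟨β, hβ⟩, ⟨α, hα⟩⟩
    let π : {π : Equiv.Perm (Fin n) // ∃ τ₁ τ₂ : Equiv.Perm (Fin n),
        g ∘ ⇑τ₁ = g ∧ f ∘ ⇑τ₂ = f ∧ π = τ₁ * σ * τ₂} := ⟨α * σ * β, α, β, hα, hβ, rfl⟩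
    have hp : α * σ * β = a π * σ * b π := hab π
    have hc : σ * (b π * β⁻¹) * σ⁻¹ = (a π)⁻¹ * α := by
      have : σ * b π = (a π)⁻¹ * (α * σ * β) := by rw [hp]; group
      rw [← mul_assoc, this]; group
    refine ⟨⟨π, ⟨b π * β⁻¹, (key _).2 ⟨?_, ?_⟩⟩⟩, ?_⟩
    · funext x
      have h := congrFun (hb π) (β⁻¹ x)
      have h' := inv_f f β hβ x
      rw [Function.comp_apply] at h
      rw [Function.comp_apply, Equiv.Perm.mul_apply, h, h']
    · rw [hc]
      funext x
      have h := inv_f g (a π) (ha π) (α x)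
      have h' := congrFun hα x
      rw [Function.comp_apply] at h'
      rw [Function.comp_apply, Equiv.Perm.mul_apply, h, h']
    · refine Prod.ext (Subtype.ext ?_) (Subtype.ext ?_)
      · show (b π * β⁻¹)⁻¹ * b π = β
        group
      · show a π * (σ * (b π * β⁻¹) * σ⁻¹) = α
        rw [hc]; group

/-- The double coset `S_μ σ S_λ` consists of exactly `λ! μ! / γ!` elements, i.e.
`card (S_μ σ S_λ) ⬝ ∏_{i,j} γ_{ij}! = λ! ⬝ μ!`, where
`γ_{ij} = card (σ(Y_i(λ)) ∩ Y_j(μ))`. -/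
theorem double_coset_card (n r s : ℕ) (hn : 0 < n)
    (lam : Fin r → ℕ) (mu : Fin s → ℕ)
    (hlampos : ∀ i, 0 < lam i) (hmupos : ∀ j, 0 < mu j)
    (hlamsum : ∑ i, lam i = n) (hmusum : ∑ j, mu j = n)
    (σ : Equiv.Perm (Fin n)) :
    Nat.card {π : Equiv.Perm (Fin n) // ∃ τ₁ τ₂ : Equiv.Perm (Fin n),
        (∀ j, (blockSet n mu j).image ⇑τ₁ = blockSet n mu j) ∧
        (∀ i, (blockSet n lam i).image ⇑τ₂ = blockSet n lam i) ∧
        π = τ₁ * σ * τ₂} *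
      ∏ i : Fin r, ∏ j : Fin s,
        Nat.factorial (((blockSet n lam i).image ⇑σ ∩ blockSet n mu j).card) =
    (∏ i, Nat.factorial (lam i)) * ∏ j, Nat.factorial (mu j) := by
  obtain ⟨f, hf⟩ := blockSet_fun_aux n r lam hlamsum
  obtain ⟨g, hg⟩ := blockSet_fun_aux n s mu hmusum
  have main := double_count_aux f g σ
  simp only [image_iff_aux _ f hf, image_iff_aux _ g hg]
  have cf : Nat.card {c : Equiv.Perm (Fin n) // f ∘ ⇑c = f} = ∏ i, Nat.factorial (lam i) := by
    rw [Nat.card_eq_fintype_card, DomMulAct.stabilizer_card]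
    refine Finset.prod_congr rfl fun i _ => ?_
    rw [Fintype.card_subtype, ← card_blockSet_aux n r lam hlamsum i]
    congr 2
    ext x; simp [hf]
  have cg : Nat.card {c : Equiv.Perm (Fin n) // g ∘ ⇑c = g} = ∏ j, Nat.factorial (mu j) := by
    rw [Nat.card_eq_fintype_card, DomMulAct.stabilizer_card]
    refine Finset.prod_congr rfl fun i _ => ?_
    rw [Fintype.card_subtype, ← card_blockSet_aux n s mu hmusum i]
    congr 2
    ext x; simp [hg]
  have cfg : Nat.card {c : Equiv.Perm (Fin n) // (fun x => (f x, g (σ x))) ∘ ⇑c =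
        (fun x => (f x, g (σ x)))} = ∏ i : Fin r, ∏ j : Fin s,
        Nat.factorial (((blockSet n lam i).image ⇑σ ∩ blockSet n mu j).card) := by
    rw [Nat.card_eq_fintype_card, DomMulAct.stabilizer_card, Fintype.prod_prod_type]
    refine Finset.prod_congr rfl fun i _ => Finset.prod_congr rfl fun j _ => ?_
    rw [Fintype.card_subtype]
    congr 1
    rw [← Finset.card_image_of_injective _ σ.injective]
    congr 1
    ext y
    simp only [Finset.mem_image, Finset.mem_inter, Finset.mem_filter, Finset.mem_univ, true_and,
      hf, hg, Prod.mk.injEq]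
    constructor
    · rintro ⟨x, ⟨h1, h2⟩, rfl⟩; exact ⟨⟨x, h1, rfl⟩, h2⟩
    · rintro ⟨⟨x, h1, rfl⟩, h2⟩; exact ⟨x, ⟨h1, h2⟩, rfl⟩
  rw [← cf, ← cg, ← cfg]
  exact main
end

section
/- Let K be a field, V a finite-dimensional K-vector space, A : V → V a K-linear map, and n ≥ 1 an integer. Let c ∈ S_n be the cyclic permutation (1,2,…,n) (sending 1↦2, 2↦3, …, n↦1), and let P_c : V^{⊗n} → V^{⊗n} be the linear automorphism of the n-fold tensor power determined by permuting the tensor factors according to c, i.e. P_c(v_1 ⊗ v_2 ⊗ ⋯ ⊗ v_n) = v_{c^{-1}(1)} ⊗ v_{c^{-1}(2)} ⊗ ⋯ ⊗ v_{c^{-1}(n)}. Then the trace of the composite linear map P_c ∘ (A ⊗ A ⊗ ⋯ ⊗ A) : V^{⊗n} → V^{⊗n} equals the trace of A^n : V → V. -/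
open scoped TensorProduct

theorem aux_path_sum {K κ : Type*} [Field K] [Fintype κ] [DecidableEq κ]
    (M : Matrix κ κ K) (m : ℕ) : ∀ N : Matrix κ κ K,
    ∑ p : Fin (m+1) → κ, N (p 0) (p (Fin.last m)) * ∏ i : Fin m, M (p i.succ) (p i.castSucc)
      = Matrix.trace (N * M ^ m) := by
  induction m with
  | zero =>
    intro N
    rw [← (Equiv.funUnique (Fin 1) κ).symm.sum_comp]
    simp [Matrix.trace]
  | succ m ih =>
    intro N
    have h := ih (M * N)
    rw [pow_succ, ← Matrix.mul_assoc, Matrix.trace_mul_comm, ← Matrix.mul_assoc, ← h,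
      ← (Fin.consEquiv (fun _ : Fin (m+2) => κ)).sum_comp, Fintype.sum_prod_type,
      Finset.sum_comm]
    refine Finset.sum_congr rfl fun q _ => ?_
    rw [Matrix.mul_apply, Finset.sum_mul]
    refine Finset.sum_congr rfl fun a _ => ?_
    rw [Fin.prod_univ_succ]
    simp only [Fin.consEquiv_apply, Fin.cons_zero, Fin.cons_succ, Fin.castSucc_zero,
      ← Fin.succ_last, ← Fin.succ_castSucc]
    ring

/-- Let `V` be a finite-dimensional vector space over a field `K`, `A : V → V` linear, and
`n ≥ 1`. If `P` is the endomorphism of the `n`-fold tensor power `V^{⊗n}` permuting the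
tensor factors according to the cyclic permutation `c = (1,2,…,n)` (so that the `i`-th
factor of `P(v₁ ⊗ ⋯ ⊗ vₙ)` is `v_{c⁻¹(i)}`; here `c = finRotate n`), then the trace of
`P ∘ (A ⊗ ⋯ ⊗ A)` equals the trace of `Aⁿ`. -/
theorem trace_cyclic_perm_tensor_pow (K : Type*) [Field K]
    (V : Type*) [AddCommGroup V] [Module K V] [FiniteDimensional K V]
    (A : V →ₗ[K] V) (n : ℕ) (hn : 1 ≤ n)
    (P : (⨂[K] _ : Fin n, V) →ₗ[K] ⨂[K] _ : Fin n, V)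
    (hP : ∀ v : Fin n → V,
      P (PiTensorProduct.tprod K v) =
        PiTensorProduct.tprod K fun i => v ((finRotate n)⁻¹ i)) :
    LinearMap.trace K _ (P ∘ₗ PiTensorProduct.map fun _ : Fin n => A) =
      LinearMap.trace K V (A ^ n) := by
  classical
  obtain ⟨m, rfl⟩ : ∃ m, n = m + 1 := ⟨n - 1, by omega⟩
  let b := Module.finBasis K V
  let B := Basis.piTensorProduct (R := K) (fun _ : Fin (m+1) => b)
  rw [LinearMap.trace_eq_matrix_trace K B, LinearMap.trace_eq_matrix_trace K b,
    ← LinearMap.toMatrix_pow, pow_succ', ← aux_path_sum, Matrix.trace]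
  refine Finset.sum_congr rfl fun p _ => ?_
  rw [Matrix.diag_apply, LinearMap.toMatrix_apply, LinearMap.comp_apply,
    Basis.piTensorProduct_apply, PiTensorProduct.map_tprod, hP,
    Basis.piTensorProduct_repr_tprod_apply, ← Equiv.prod_comp (finRotate (m+1)),
    Fin.prod_univ_castSucc, mul_comm]
  simp only [Equiv.Perm.inv_def, Equiv.symm_apply_apply, LinearMap.toMatrix_apply]
  simp
end
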